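/- Let F be the free group on generators x₁, y₁, x₂, y₂, let H be the 4-dimensional ℚ-vector space with basis X₁,Y₁,X₂,Y₂ equipped with the alternating bilinear form ⟨·,·⟩ with ⟨Xᵢ,Yⱼ⟩ = δᵢⱼ and ⟨Xᵢ,Xⱼ⟩ = ⟨Yᵢ,Yⱼ⟩ = 0, let φ : F → H be the homomorphism with φ(xᵢ) = Xᵢ and φ(yᵢ) = Yᵢ, and let ℓ : F → ∧²H be a half-intersection cocycle for φ with ℓ(xᵢ) = (1/2)·Xᵢ∧Yᵢ and ℓ(yᵢ) = −(1/2)·Xᵢ∧Yᵢ for i = 1, 2. Set ζ = [x₁,y₁][x₂,y₂], a = x₁, and b = x₂⁻¹·[y₁,ζ]·ζ. Then ℓ(ζ) = X₁∧Y₁ + X₂∧Y₂, φ(b) = −X₂, and ℓ(a)(φ(b)) + ℓ(b)(φ(a)) = −φ(a); in particular this value lies in ℤ·φ(a) + ℤ·φ(b). -/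

import Mathlib

/-!
A half-intersection cocycle sends a commutator `[g, h]` to `φ g ∧ φ h`: apply the cocycle rule to
`[g, h] · (h g) = g h`, using `φ [g, h] = 0` and antisymmetry of the wedge
(`IsHalfCocycle.map_commutator`). Moreover `ℓ` is additive on a product as soon as one factor lies
in the kernel of `φ`, and `ℓ (g⁻¹) = -ℓ g`.
Hence `ℓ ζ = X₁ ∧ Y₁ + X₂ ∧ Y₂`, and, as `φ ζ = 0`, `ℓ [y₁, ζ] = 0`, so
`ℓ b = -ℓ x₂ + ℓ ζ = X₁ ∧ Y₁ + (1/2) X₂ ∧ Y₂`. Contracting `X₁` with this gives `-X₁`, while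
`ℓ a = (1/2) X₁ ∧ Y₁` kills `φ b = -X₂`.
-/

open scoped TensorProduct

/-- The wedge `x ∧ y` as an element of the exterior square `⋀[ℚ]^2 H`. -/
noncomputable def wedge {H : Type*} [AddCommGroup H] [Module ℚ H] (x y : H) : ⋀[ℚ]^2 H :=
  ⟨ExteriorAlgebra.ι ℚ x * ExteriorAlgebra.ι ℚ y, by
    rw [ExteriorAlgebra.exteriorPower, pow_two]
    exact Submodule.mul_mem_mul (LinearMap.mem_range_self _ x) (LinearMap.mem_range_self _ y)⟩

/-- `ℓ : π → ⋀²H` is a half-intersection cocycle for `φ` if `ℓ(1) = 0` and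
`ℓ(gh) = ℓ(g) + ℓ(h) + (1/2)·φ(g)∧φ(h)`. -/
def IsHalfCocycle {π H : Type*} [Group π] [AddCommGroup H] [Module ℚ H]
    (φ : π → H) (ℓ : π → ⋀[ℚ]^2 H) : Prop :=
  ℓ 1 = 0 ∧ ∀ g h : π, ℓ (g * h) = ℓ g + ℓ h + (1/2 : ℚ) • wedge (φ g) (φ h)

/-- The standard basis vector `Xᵢ`/`Yᵢ` of the homology of the genus-2 surface:
`e 0 = X₁`, `e 1 = Y₁`, `e 2 = X₂`, `e 3 = Y₂`. -/
def e (i : Fin 4) : Fin 4 → ℚ := Pi.single i 1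

section Wedge

variable {H : Type*} [AddCommGroup H] [Module ℚ H]

lemma wedge_zero_left (y : H) : wedge 0 y = 0 := by
  apply Subtype.ext; simp [wedge]

lemma wedge_zero_right (x : H) : wedge x 0 = 0 := by
  apply Subtype.ext; simp [wedge]

lemma wedge_neg_right (x y : H) : wedge x (-y) = -wedge x y := by
  apply Subtype.ext; simp [wedge]

lemma wedge_self (x : H) : wedge x x = 0 := by
  apply Subtype.ext; simp [wedge]

lemma wedge_swap (x y : H) : wedge y x = -wedge x y := by
  apply Subtype.ext
  have h := ExteriorAlgebra.ι_add_mul_swap (R := ℚ) x y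
  simpa [wedge] using eq_neg_of_add_eq_zero_right h

end Wedge

section Additive

variable {π H : Type*} [Group π] [AddCommGroup H] {φ : π → H}

lemma map_one_of_additive (hφ : ∀ g h, φ (g * h) = φ g + φ h) : φ 1 = 0 := by
  simpa using hφ 1 1

lemma map_inv_of_additive (hφ : ∀ g h, φ (g * h) = φ g + φ h) (g : π) : φ g⁻¹ = -φ g := by
  have h := hφ g g⁻¹
  rw [mul_inv_cancel, map_one_of_additive hφ] at h
  exact eq_neg_of_add_eq_zero_right h.symm

lemma map_commutator_of_additive (hφ : ∀ g h, φ (g * h) = φ g + φ h) (g h : π) :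
    φ (g * h * g⁻¹ * h⁻¹) = 0 := by
  simp only [hφ, map_inv_of_additive hφ]
  abel

end Additive

section Cocycle

variable {π H : Type*} [Group π] [AddCommGroup H] [Module ℚ H] {φ : π → H} {ℓ : π → ⋀[ℚ]^2 H}

lemma IsHalfCocycle.map_inv (hℓ : IsHalfCocycle φ ℓ) (hφ : ∀ g h, φ (g * h) = φ g + φ h)
    (g : π) : ℓ g⁻¹ = -ℓ g := by
  have h := hℓ.2 g g⁻¹
  rw [mul_inv_cancel, hℓ.1, map_inv_of_additive hφ, wedge_neg_right, wedge_self, neg_zero,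
    smul_zero, add_zero] at h
  exact eq_neg_of_add_eq_zero_right h.symm

lemma IsHalfCocycle.map_mul_of_left (hℓ : IsHalfCocycle φ ℓ) {g : π} (hg : φ g = 0) (h : π) :
    ℓ (g * h) = ℓ g + ℓ h := by
  rw [hℓ.2, hg, wedge_zero_left, smul_zero, add_zero]

lemma IsHalfCocycle.map_mul_of_right (hℓ : IsHalfCocycle φ ℓ) (g : π) {h : π} (hh : φ h = 0) :
    ℓ (g * h) = ℓ g + ℓ h := by
  rw [hℓ.2, hh, wedge_zero_right, smul_zero, add_zero]

lemma IsHalfCocycle.map_commutator (hℓ : IsHalfCocycle φ ℓ)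
    (hφ : ∀ g h, φ (g * h) = φ g + φ h) (g h : π) :
    ℓ (g * h * g⁻¹ * h⁻¹) = wedge (φ g) (φ h) := by
  have key := hℓ.map_mul_of_left (map_commutator_of_additive hφ g h) (h * g)
  rw [show g * h * g⁻¹ * h⁻¹ * (h * g) = g * h by group, hℓ.2 g h, hℓ.2 h g,
    wedge_swap (φ g) (φ h)] at key
  linear_combination (norm := module) -key

end Cocycle

theorem converse_fails_example
    (ω : (Fin 4 → ℚ) →ₗ[ℚ] (Fin 4 → ℚ) →ₗ[ℚ] ℚ)
    (hω : ∀ u v : Fin 4 → ℚ, ω u v = u 0 * v 1 - u 1 * v 0 + u 2 * v 3 - u 3 * v 2)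
    (act : ⋀[ℚ]^2 (Fin 4 → ℚ) →ₗ[ℚ] (Fin 4 → ℚ) →ₗ[ℚ] (Fin 4 → ℚ))
    (hact : ∀ X Y Z : Fin 4 → ℚ, act (wedge X Y) Z = ω Z X • Y - ω Z Y • X)
    (φ : FreeGroup (Fin 4) → (Fin 4 → ℚ))
    (hφ : ∀ g h : FreeGroup (Fin 4), φ (g * h) = φ g + φ h)
    (hφ₀ : ∀ i : Fin 4, φ (FreeGroup.of i) = e i)
    (ℓ : FreeGroup (Fin 4) → ⋀[ℚ]^2 (Fin 4 → ℚ))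
    (hℓ : IsHalfCocycle φ ℓ)
    (hx1 : ℓ (FreeGroup.of 0) = (1/2 : ℚ) • wedge (e 0) (e 1))
    (hy1 : ℓ (FreeGroup.of 1) = -((1/2 : ℚ) • wedge (e 0) (e 1)))
    (hx2 : ℓ (FreeGroup.of 2) = (1/2 : ℚ) • wedge (e 2) (e 3))
    (hy2 : ℓ (FreeGroup.of 3) = -((1/2 : ℚ) • wedge (e 2) (e 3)))
    (ζ a b : FreeGroup (Fin 4))
    (hζ : ζ = (FreeGroup.of 0 * FreeGroup.of 1 * (FreeGroup.of 0)⁻¹ * (FreeGroup.of 1)⁻¹)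
      * (FreeGroup.of 2 * FreeGroup.of 3 * (FreeGroup.of 2)⁻¹ * (FreeGroup.of 3)⁻¹))
    (ha : a = FreeGroup.of 0)
    (hb : b = (FreeGroup.of 2)⁻¹ * (FreeGroup.of 1 * ζ * (FreeGroup.of 1)⁻¹ * ζ⁻¹) * ζ) :
    ℓ ζ = wedge (e 0) (e 1) + wedge (e 2) (e 3) ∧
    φ b = -(e 2) ∧
    act (ℓ a) (φ b) + act (ℓ b) (φ a) = -(φ a) ∧
    ∃ m n : ℤ, act (ℓ a) (φ b) + act (ℓ b) (φ a) = m • φ a + n • φ b := by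
  have hφζ : φ ζ = 0 := by
    rw [hζ, hφ, map_commutator_of_additive hφ, map_commutator_of_additive hφ, add_zero]
  have hℓζ : ℓ ζ = wedge (e 0) (e 1) + wedge (e 2) (e 3) := by
    rw [hζ, hℓ.map_mul_of_left (map_commutator_of_additive hφ _ _), hℓ.map_commutator hφ,
      hℓ.map_commutator hφ, hφ₀, hφ₀, hφ₀, hφ₀]
  have hφb : φ b = -(e 2) := by
    rw [hb, hφ, hφ, map_commutator_of_additive hφ, hφζ, map_inv_of_additive hφ, hφ₀, add_zero,
      add_zero]
  have hℓb : ℓ b = wedge (e 0) (e 1) + (1/2 : ℚ) • wedge (e 2) (e 3) := by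
    rw [hb, hℓ.map_mul_of_right _ hφζ,
      hℓ.map_mul_of_right _ (map_commutator_of_additive hφ _ _), hℓ.map_commutator hφ, hφζ,
      wedge_zero_right, hℓ.map_inv hφ, hx2, hℓζ]
    module
  have hval : act (ℓ a) (φ b) + act (ℓ b) (φ a) = -(φ a) := by
    rw [hφb, hℓb, ha, hx1, hφ₀]
    simp only [map_add, map_smul, LinearMap.add_apply, LinearMap.smul_apply, hact, hω]
    simp [e]
  refine ⟨hℓζ, hφb, hval, -1, 0, ?_⟩
  rw [hval]
  simp
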